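/- Let n ≥ 8 be divisible by 4, let H be a saturated orthogonal array OA(n,n−1,2,2), and let H' be the n×(n−2) design obtained from H by deleting one fixed column. Let X₀ be the n × ((n−2)(n−1)/2) design whose columns are the n−2 columns of H' together with the interaction columns of all unordered pairs of distinct columns of H', and let X be obtained from X₀ by deleting any single column (either a column of H' or an interaction column). Then E(s²)(X) = n(n−4)/(n−3), and X is E(s²)-optimal: E(s²)(X) ≤ E(s²)(Y) for every n × ((n−2)(n−1)/2 − 1) balanced two-level design Y. -/

import Mathlib

/-!
The squared entries of `XᵀX` and of `XXᵀ` have the same sum, and for a balanced design the entries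
of `XXᵀ` sum to zero, so shifting all of them by a constant `t` changes the sum of their squares by
a quantity depending only on the size of `X`. Hence `E(s²)` is smallest when every off-diagonal
entry of `XXᵀ` is as close to `-t` as possible. Take `t = (n - 2) / 2`: for even `n` the shifted
entries are odd integers, so their squares are at least `1`.

This bound is attained. Adjoining a column of ones to `H` gives a Hadamard matrix, so distinct rows
of `H` have dot product `-1` and distinct rows of `H'` have dot product `p` with `(p + 1)² = 1`.
Adding the interactions turns `p` into `p + (p² - (n - 2)) / 2 = -(n - 2) / 2`, and deleting a
column then changes this by `±1`.
-/

open Finset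

/-- The `E(s²)` value of an `n × m` two-level design `X` (columns indexed by `ι`,
`m = card ι`): the average of the squared off-diagonal entries of `XᵀX`. -/
noncomputable def Es2 {n : ℕ} {ι : Type} [Fintype ι] [DecidableEq ι]
    (X : Fin n → ι → ℚ) : ℚ :=
  (∑ i : ι, ∑ j : ι, if i ≠ j then (∑ r : Fin n, X r i * X r j) ^ 2 else 0) /
    ((Fintype.card ι : ℚ) * ((Fintype.card ι : ℚ) - 1))

section FiniteSums

variable {ι κ K : Type*} [Fintype ι] [Fintype κ]

theorem sum_sum_eq_sum_diag_add_sum_offDiag [AddCommMonoid K] (F : ι → ι → K) :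
    ∑ i, ∑ j, F i j = ∑ i, F i i + ∑ p ∈ univ.offDiag, F p.1 p.2 := by
  classical
  rw [← Fintype.sum_prod_type', ← univ_product_univ, ← diag_union_offDiag,
    sum_union (disjoint_diag_offDiag _), sum_diag]

theorem sum_sum_ite_ne_eq_sum_offDiag [DecidableEq ι] [AddCommMonoid K] (F : ι → ι → K) :
    (∑ i, ∑ j, if i ≠ j then F i j else 0) = ∑ p ∈ univ.offDiag, F p.1 p.2 := by
  rw [sum_sum_eq_sum_diag_add_sum_offDiag]
  simp only [ne_eq, not_true_eq_false, if_false, sum_const_zero, zero_add]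
  exact sum_congr rfl fun p hp => if_pos (mem_offDiag.1 hp).2.2

theorem sum_offDiag_mul_eq_two_mul_sum_lt [LinearOrder ι] [CommSemiring K] (f : ι → K) :
    ∑ p ∈ univ.offDiag, f p.1 * f p.2 = 2 * ∑ p : {p : ι × ι // p.1 < p.2}, f p.1.1 * f p.1.2 := by
  have offDiag_eq : (univ : Finset ι).offDiag =
      univ.filter (fun p : ι × ι => p.1 < p.2) ∪ univ.filter (fun p : ι × ι => p.2 < p.1) := by
    ext p
    simp [lt_or_lt_iff_ne]
  have swap : ∑ p : ι × ι with p.2 < p.1, f p.1 * f p.2 =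
      ∑ p : ι × ι with p.1 < p.2, f p.1 * f p.2 :=
    sum_equiv (Equiv.prodComm ι ι) (by simp) fun p _ => mul_comm _ _
  rw [offDiag_eq, sum_union (disjoint_filter.2 fun p _ h => h.not_gt), swap, ← two_mul,
    sum_subtype _ (p := fun p : ι × ι => p.1 < p.2) (by simp)]

theorem sq_sum_eq_sum_sq_add_two_mul_sum_lt [LinearOrder ι] [CommSemiring K] (f : ι → K) :
    (∑ i, f i) ^ 2 = ∑ i, f i ^ 2 + 2 * ∑ p : {p : ι × ι // p.1 < p.2}, f p.1.1 * f p.1.2 := by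
  rw [sq, sum_mul_sum, sum_sum_eq_sum_diag_add_sum_offDiag, sum_offDiag_mul_eq_two_mul_sum_lt]
  simp only [sq]

theorem card_subtype_ne_add_one [DecidableEq ι] (c : ι) :
    Fintype.card {i // i ≠ c} + 1 = Fintype.card ι := by
  have card_eq : Fintype.card {i // i ≠ c} = Fintype.card ι - 1 := Set.card_ne_eq c
  rw [card_eq, Nat.sub_add_cancel (Fintype.card_pos_iff.2 ⟨c⟩)]

theorem card_sum_lt_eq_choose_two [LinearOrder ι] :
    Fintype.card (ι ⊕ {p : ι × ι // p.1 < p.2}) = (Fintype.card ι + 1).choose 2 := by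
  have h := sq_sum_eq_sum_sq_add_two_mul_sum_lt (fun _ : ι => 1)
  simp only [one_pow, mul_one, sum_const, card_univ, smul_eq_mul] at h
  rw [Fintype.card_sum, Nat.choose_two_right, Nat.add_sub_cancel, add_mul, ← sq, h]
  lia

theorem sum_sum_sq_dotProduct_col [CommSemiring K] (X : κ → ι → K) :
    ∑ i, ∑ j, (∑ r, X r i * X r j) ^ 2 = ∑ r, ∑ s, (X r ⬝ᵥ X s) ^ 2 := by
  calc ∑ i, ∑ j, (∑ r, X r i * X r j) ^ 2
      = ∑ p : ι × ι, ∑ q : κ × κ, X q.1 p.1 * X q.1 p.2 * (X q.2 p.1 * X q.2 p.2) := by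
        simp only [sq, sum_mul_sum, Fintype.sum_prod_type]
    _ = ∑ q : κ × κ, ∑ p : ι × ι, X q.1 p.1 * X q.2 p.1 * (X q.1 p.2 * X q.2 p.2) := by
        rw [sum_comm]
        exact sum_congr rfl fun q _ => sum_congr rfl fun p _ => mul_mul_mul_comm _ _ _ _
    _ = ∑ r, ∑ s, (X r ⬝ᵥ X s) ^ 2 := by
        simp only [sq, dotProduct, sum_mul_sum, Fintype.sum_prod_type]

end FiniteSums

section Designs

variable {R ι K : Type*} [CommRing K]

/-- A two-level design, with rows (runs) indexed by `R` and columns (factors) by `ι`. -/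
def IsTwoLevel (X : R → ι → K) : Prop :=
  ∀ r c, X r c = 1 ∨ X r c = -1

/-- A balanced design: each column sums to zero. -/
def IsBalanced [Fintype R] (X : R → ι → K) : Prop :=
  ∀ c, ∑ r, X r c = 0

/-- A design whose distinct columns have dot product zero. -/
def HasOrthogonalCols [Fintype R] (X : R → ι → K) : Prop :=
  ∀ i j, i ≠ j → ∑ r, X r i * X r j = 0

/-- The design obtained from `X` by deleting its column `c`. -/
def deleteCol (X : R → ι → K) (c : ι) : R → {i : ι // i ≠ c} → K :=
  fun r i => X r i

/-- The design `X` augmented with the interaction columns of all unordered pairs of distinct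
columns; a linear order on `ι` selects one representative `(i, j)` with `i < j` of each pair. -/
def withInteractions [LT ι] (X : R → ι → K) : R → ι ⊕ {p : ι × ι // p.1 < p.2} → K :=
  fun r => Sum.elim (X r) fun p => X r p.1.1 * X r p.1.2

namespace IsTwoLevel

variable {X : R → ι → K}

theorem mul_self (hX : IsTwoLevel X) (r : R) (c : ι) : X r c * X r c = 1 := by
  rcases hX r c with h | h <;> simp [h]

theorem mul_eq_one_or_eq_neg_one (hX : IsTwoLevel X) (r s : R) (i j : ι) :
    X r i * X s j = 1 ∨ X r i * X s j = -1 := by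
  rcases hX r i with h | h <;> rcases hX s j with h' | h' <;> simp [h, h']

theorem sq_mul (hX : IsTwoLevel X) (r s : R) (c : ι) : (X r c * X s c) ^ 2 = 1 := by
  rw [mul_pow, sq, sq, hX.mul_self, hX.mul_self, one_mul]

theorem deleteCol (hX : IsTwoLevel X) (c : ι) : IsTwoLevel (deleteCol X c) :=
  fun r i => hX r i

theorem withInteractions [LT ι] (hX : IsTwoLevel X) : IsTwoLevel (withInteractions X) := by
  rintro r (i | p)
  · exact hX r i
  · exact hX.mul_eq_one_or_eq_neg_one r r p.1.1 p.1.2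

theorem dotProduct_self [Fintype ι] (hX : IsTwoLevel X) (r : R) :
    X r ⬝ᵥ X r = Fintype.card ι := by
  simp [dotProduct, hX.mul_self]

theorem exists_dotProduct_eq_card_add_two_mul [Fintype ι] (hX : IsTwoLevel X) (r s : R) :
    ∃ z : ℤ, X r ⬝ᵥ X s = Fintype.card ι + 2 * z := by
  have entry (c : ι) : ∃ z : ℤ, X r c * X s c = 1 + 2 * z := by
    rcases hX.mul_eq_one_or_eq_neg_one r s c c with h | h
    · exact ⟨0, by simp [h]⟩
    · exact ⟨-1, by rw [h]; push_cast; ring⟩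
  choose z hz using entry
  exact ⟨∑ c, z c, by simp [dotProduct, hz, sum_add_distrib, mul_sum]⟩

theorem one_le_sq_dotProduct_add [LinearOrder K] [IsStrictOrderedRing K] [Fintype ι]
    (hX : IsTwoLevel X) {t : ℤ} (ht : Odd (Fintype.card ι + t)) (r s : R) :
    1 ≤ (X r ⬝ᵥ X s + t) ^ 2 := by
  obtain ⟨z, hz⟩ := hX.exists_dotProduct_eq_card_add_two_mul r s
  have odd : Odd (Fintype.card ι + 2 * z + t) := by grind
  have one_le : 1 ≤ (Fintype.card ι + 2 * z + t) ^ 2 :=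
    (one_le_sq_iff_one_le_abs _).2 (Int.one_le_abs (by intro h; simp [h] at odd))
  rw [hz]
  exact_mod_cast one_le

end IsTwoLevel

theorem dotProduct_deleteCol [Fintype ι] [DecidableEq ι] (X : R → ι → K) (c : ι) (r s : R) :
    deleteCol X c r ⬝ᵥ deleteCol X c s = X r ⬝ᵥ X s - X r c * X s c :=
  eq_sub_of_add_eq' (Fintype.sum_eq_add_sum_subtype_ne (fun i => X r i * X s i) c).symm

theorem two_mul_dotProduct_withInteractions [Fintype ι] [LinearOrder ι] {X : R → ι → K}
    (hX : IsTwoLevel X) (r s : R) :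
    2 * (withInteractions X r ⬝ᵥ withInteractions X s) =
      (X r ⬝ᵥ X s + 1) ^ 2 - (Fintype.card ι + 1) := by
  have pairs := sq_sum_eq_sum_sq_add_two_mul_sum_lt fun c => X r c * X s c
  simp only [hX.sq_mul, sum_const, card_univ, nsmul_eq_mul, mul_one] at pairs
  simp only [dotProduct, withInteractions, Fintype.sum_sum_type, Sum.elim_inl, Sum.elim_inr,
    mul_mul_mul_comm (X r _) (X r _)]
  linear_combination -pairs

variable [Fintype R]

namespace IsBalanced

variable {X : R → ι → K}

theorem deleteCol (hX : IsBalanced X) (c : ι) : IsBalanced (deleteCol X c) :=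
  fun i => hX i

theorem withInteractions [Preorder ι] (hX : IsBalanced X) (horth : HasOrthogonalCols X) :
    IsBalanced (withInteractions X) := by
  rintro (i | p)
  · exact hX i
  · exact horth _ _ p.2.ne

theorem sum_sum_dotProduct [Fintype ι] (hX : IsBalanced X) : ∑ r, ∑ s, X r ⬝ᵥ X s = 0 := by
  refine sum_eq_zero fun r _ => ?_
  simp only [dotProduct]
  rw [sum_comm]
  simp [← mul_sum, hX _]

theorem sum_sum_sq_dotProduct_add [Fintype ι] (hX : IsBalanced X) (t : K) :
    ∑ r, ∑ s, (X r ⬝ᵥ X s + t) ^ 2 =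
      ∑ r, ∑ s, (X r ⬝ᵥ X s) ^ 2 + Fintype.card R ^ 2 * t ^ 2 := by
  simp only [add_sq, sum_add_distrib, mul_right_comm (2 : K) _ t, ← mul_sum, hX.sum_sum_dotProduct,
    sum_const, card_univ, nsmul_eq_mul]
  ring

theorem sum_offDiag_sq_dotProduct_col [Fintype ι] (hX : IsBalanced X) (hpm : IsTwoLevel X) (t : K) :
    ∑ p ∈ univ.offDiag, (∑ r, X r p.1 * X r p.2) ^ 2 =
      ∑ p ∈ univ.offDiag, (X p.1 ⬝ᵥ X p.2 + t) ^ 2 + Fintype.card R * (Fintype.card ι + t) ^ 2 -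
        Fintype.card R ^ 2 * t ^ 2 - Fintype.card ι * Fintype.card R ^ 2 := by
  have cols := sum_sum_eq_sum_diag_add_sum_offDiag fun i j => (∑ r, X r i * X r j) ^ 2
  have rows := sum_sum_eq_sum_diag_add_sum_offDiag fun r s => (X r ⬝ᵥ X s + t) ^ 2
  simp only [hpm.mul_self, sum_const, card_univ, nsmul_eq_mul, mul_one] at cols
  simp only [hpm.dotProduct_self, sum_const, card_univ, nsmul_eq_mul] at rows
  linear_combination -cols + rows + sum_sum_sq_dotProduct_col X - hX.sum_sum_sq_dotProduct_add t

end IsBalanced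

theorem HasOrthogonalCols.deleteCol {X : R → ι → K} (hX : HasOrthogonalCols X) (c : ι) :
    HasOrthogonalCols (deleteCol X c) :=
  fun i j hij => hX i j (Subtype.coe_injective.ne hij)

/-- A saturated two-level orthogonal array of strength 2, `OA(n, n-1, 2, 2)` with `n` the number of
rows. Saturation is stated as `n = (number of columns) + 1`, which avoids truncated subtraction. -/
structure IsSaturatedOrthogonalArray [Fintype ι] (H : R → ι → K) : Prop where
  twoLevel : IsTwoLevel H
  balanced : IsBalanced H
  orthogonalCols : HasOrthogonalCols H
  card_rows : Fintype.card R = Fintype.card ι + 1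

end Designs

section SaturatedArrays

namespace IsSaturatedOrthogonalArray

variable {R C K : Type*} [Fintype R] [Fintype C] [Field K] [CharZero K] {H : R → C → K}

theorem dotProduct_eq_neg_one (hH : IsSaturatedOrthogonalArray H) {r s : R} (hrs : r ≠ s) :
    H r ⬝ᵥ H s = -1 := by
  classical
  have hR : (Fintype.card R : K) ≠ 0 := by simp [hH.card_rows, Nat.cast_add_one_ne_zero]
  let A : Matrix R (Option C) K := Matrix.of fun i o => o.elim 1 (H i)
  have gram_cols : A.transpose * A = (Fintype.card R : K) • 1 := by
    ext (_ | i) (_ | j)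
    · simp [A, Matrix.mul_apply]
    · simp [A, Matrix.mul_apply, hH.balanced j]
    · simp [A, Matrix.mul_apply, hH.balanced i]
    · rcases eq_or_ne i j with rfl | hij
      · simp [A, Matrix.mul_apply, hH.twoLevel.mul_self]
      · simp [A, Matrix.mul_apply, hH.orthogonalCols i j hij, hij]
  have gram_rows : A * A.transpose = (Fintype.card R : K) • 1 := by
    rw [← inv_smul_eq_iff₀ hR, ← Matrix.mul_smul,
      Matrix.mul_eq_one_comm_of_card_eq _ _ _ (by simp [hH.card_rows]), Matrix.smul_mul, gram_cols,
      inv_smul_smul₀ hR]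
  have entry : 1 + H r ⬝ᵥ H s = 0 := by
    simpa [A, Matrix.mul_apply, Matrix.one_apply_ne hrs, dotProduct] using
      congrFun₂ gram_rows r s
  exact eq_neg_of_add_eq_zero_right entry

theorem sq_dotProduct_deleteCol_withInteractions_add [LinearOrder C]
    (hH : IsSaturatedOrthogonalArray H) (c : C)
    (d : {j // j ≠ c} ⊕ {p : {j // j ≠ c} × {j // j ≠ c} // p.1 < p.2}) {r s : R} (hrs : r ≠ s) :
    (deleteCol (withInteractions (deleteCol H c)) d r ⬝ᵥ
      deleteCol (withInteractions (deleteCol H c)) d s + (Fintype.card R - 2) / 2) ^ 2 = 1 := by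
  have main_effects : (deleteCol H c r ⬝ᵥ deleteCol H c s + 1) ^ 2 = 1 := by
    rw [dotProduct_deleteCol, hH.dotProduct_eq_neg_one hrs]
    linear_combination hH.twoLevel.sq_mul r s c
  have card_cols : (Fintype.card {j // j ≠ c} : K) = Fintype.card R - 2 := by
    rw [hH.card_rows, ← card_subtype_ne_add_one c]
    push_cast
    ring
  have augmented : withInteractions (deleteCol H c) r ⬝ᵥ withInteractions (deleteCol H c) s =
      -((Fintype.card R - 2) / 2) := by
    have := two_mul_dotProduct_withInteractions (hH.twoLevel.deleteCol c) r s
    rw [main_effects, card_cols] at this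
    linear_combination this / 2
  rw [dotProduct_deleteCol, augmented]
  linear_combination (hH.twoLevel.deleteCol c).withInteractions.sq_mul r s d

end IsSaturatedOrthogonalArray

end SaturatedArrays

section Optimality

variable {n : ℕ} {ι κ : Type} [Fintype ι] [DecidableEq ι] [Fintype κ] [DecidableEq κ]
  {X : Fin n → ι → ℚ} {Y : Fin n → κ → ℚ}

theorem Es2_eq_sum_offDiag_sq_dotProduct_add (hpm : IsTwoLevel X) (hbal : IsBalanced X) (t : ℚ) :
    Es2 X = (∑ p ∈ univ.offDiag, (X p.1 ⬝ᵥ X p.2 + t) ^ 2 + n * (Fintype.card ι + t) ^ 2 -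
      n ^ 2 * t ^ 2 - Fintype.card ι * n ^ 2) / (Fintype.card ι * (Fintype.card ι - 1)) := by
  rw [Es2, sum_sum_ite_ne_eq_sum_offDiag, hbal.sum_offDiag_sq_dotProduct_col hpm t,
    Fintype.card_fin]

theorem Es2_le_Es2_of_sq_dotProduct_add_le (hX : IsTwoLevel X) (hXb : IsBalanced X)
    (hY : IsTwoLevel Y) (hYb : IsBalanced Y) (hcard : Fintype.card ι = Fintype.card κ) (t : ℚ)
    (h : ∀ r s, r ≠ s → (X r ⬝ᵥ X s + t) ^ 2 ≤ (Y r ⬝ᵥ Y s + t) ^ 2) : Es2 X ≤ Es2 Y := by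
  rw [Es2_eq_sum_offDiag_sq_dotProduct_add hX hXb t, Es2_eq_sum_offDiag_sq_dotProduct_add hY hYb t,
    hcard]
  have sum_le : ∑ p ∈ univ.offDiag, (X p.1 ⬝ᵥ X p.2 + t) ^ 2 ≤
      ∑ p ∈ univ.offDiag, (Y p.1 ⬝ᵥ Y p.2 + t) ^ 2 :=
    sum_le_sum fun p hp => h _ _ (mem_offDiag.1 hp).2.2
  have pairs_nonneg : 0 ≤ (Fintype.card κ * (Fintype.card κ - 1) : ℚ) := by
    rcases (Fintype.card κ).eq_zero_or_pos with h0 | hpos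
    · simp [h0]
    · have : (1 : ℚ) ≤ Fintype.card κ := mod_cast hpos
      exact mul_nonneg (by positivity) (by linarith)
  gcongr

theorem Es2_eq_of_sq_dotProduct_add_eq_one (hn : 4 ≤ n) (hpm : IsTwoLevel X) (hbal : IsBalanced X)
    (hcard : (Fintype.card ι : ℚ) = n * (n - 3) / 2)
    (h : ∀ r s, r ≠ s → (X r ⬝ᵥ X s + (n - 2) / 2) ^ 2 = 1) :
    Es2 X = n * (n - 4) / (n - 3) := by
  have hn' : (4 : ℚ) ≤ n := mod_cast hn
  have sum_eq : ∑ p ∈ univ.offDiag, (X p.1 ⬝ᵥ X p.2 + (n - 2) / 2) ^ 2 = (n * n - n : ℚ) := by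
    rw [sum_congr rfl fun p hp => h _ _ (mem_offDiag.1 hp).2.2]
    simp [offDiag_card, Nat.cast_sub (Nat.le_mul_self n)]
  have h₀ : (n : ℚ) * (n - 3) / 2 ≠ 0 := by nlinarith
  have h₁ : (n : ℚ) * (n - 3) / 2 - 1 ≠ 0 := by nlinarith
  have h₂ : (n : ℚ) - 3 ≠ 0 := by linarith
  rw [Es2_eq_sum_offDiag_sq_dotProduct_add hpm hbal, sum_eq, hcard,
    div_eq_div_iff (mul_ne_zero h₀ h₁) h₂]
  ring

end Optimality

theorem IsTwoLevel.one_le_sq_dotProduct_add_of_even {R ι K : Type*} [Field K] [LinearOrder K]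
    [IsStrictOrderedRing K] [Fintype ι] {X : R → ι → K} (hpm : IsTwoLevel X) {n : ℕ} (hn : Even n)
    (hcard : (Fintype.card ι : K) = n * (n - 3) / 2) (r s : R) :
    1 ≤ (X r ⬝ᵥ X s + (n - 2) / 2) ^ 2 := by
  obtain ⟨k, rfl⟩ := hn
  have shift : (((k + k : ℕ) : K) - 2) / 2 = ((k - 1 : ℤ) : K) := by push_cast; ring
  have card_eq : (Fintype.card ι : ℤ) = k * (2 * k - 3) := by
    have : (Fintype.card ι : K) = k * (2 * k - 3) := by rw [hcard]; push_cast; ring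
    exact_mod_cast this
  rw [shift]
  exact hpm.one_le_sq_dotProduct_add ⟨k ^ 2 - k - 1, by rw [card_eq]; ring⟩ r s

theorem card_cols_deleteCol_withInteractions {C : Type*} [Fintype C] [LinearOrder C] (c : C)
    (d : {j // j ≠ c} ⊕ {p : {j // j ≠ c} × {j // j ≠ c} // p.1 < p.2}) :
    Fintype.card {i // i ≠ d} = (Fintype.card C).choose 2 - 1 := by
  rw [← card_subtype_ne_add_one c, ← card_sum_lt_eq_choose_two, ← card_subtype_ne_add_one d,
    Nat.add_sub_cancel]

theorem cast_choose_two_sub_one {K : Type*} [Field K] [CharZero K] {n : ℕ} (hn : 3 ≤ n) :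
    (((n - 1).choose 2 - 1 : ℕ) : K) = n * (n - 3) / 2 := by
  rw [Nat.cast_pred (Nat.choose_pos (by lia)), Nat.cast_choose_two, Nat.cast_pred (by lia)]
  ring

/-- Let `H'` be a saturated `OA(n, n-1, 2, 2)` with one fixed column
deleted. Deleting any single column (a main-effect or an interaction column) from the
`n × ((n-2)(n-1)/2)` design obtained by augmenting `H'` with all its two-column
interactions yields a design `X` with `E(s²)(X) = n(n-4)/(n-3)`, which is
`E(s²)`-optimal among all balanced `n × ((n-2)(n-1)/2 - 1)` two-level designs. -/
theorem Es2_optimal_delete_one_minus_one_col (n : ℕ) (hn : 8 ≤ n) (h4 : 4 ∣ n)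
    (H : Fin n → Fin (n - 1) → ℚ)
    (hpm : ∀ i j, H i j = 1 ∨ H i j = -1)
    (hbal : ∀ j, ∑ i : Fin n, H i j = 0)
    (horth : ∀ j k : Fin (n - 1), j ≠ k → ∑ i : Fin n, H i j * H i k = 0)
    (cdel : Fin (n - 1))
    (c0 : {j : Fin (n - 1) // j ≠ cdel} ⊕
      {p : {j : Fin (n - 1) // j ≠ cdel} × {j : Fin (n - 1) // j ≠ cdel} //
        p.1.1 < p.2.1})
    (X : Fin n → {c : {j : Fin (n - 1) // j ≠ cdel} ⊕
      {p : {j : Fin (n - 1) // j ≠ cdel} × {j : Fin (n - 1) // j ≠ cdel} //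
        p.1.1 < p.2.1} // c ≠ c0} → ℚ)
    (hX : ∀ r c, X r c =
      Sum.elim (fun j => H r j.1) (fun p => H r p.1.1.1 * H r p.1.2.1) c.1) :
    Es2 X = (n : ℚ) * ((n : ℚ) - 4) / ((n : ℚ) - 3) ∧
      ∀ Y : Fin n → Fin ((n - 2) * (n - 1) / 2 - 1) → ℚ,
        (∀ i j, Y i j = 1 ∨ Y i j = -1) → (∀ j, ∑ i : Fin n, Y i j = 0) →
          Es2 X ≤ Es2 Y := by
  obtain rfl : X = deleteCol (withInteractions (deleteCol H cdel)) c0 := funext₂ hX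
  have hH : IsSaturatedOrthogonalArray H :=
    ⟨hpm, hbal, horth, by simp only [Fintype.card_fin]; lia⟩
  have two_level := (hH.twoLevel.deleteCol cdel).withInteractions.deleteCol c0
  have balanced := ((hH.balanced.deleteCol cdel).withInteractions
    (hH.orthogonalCols.deleteCol cdel)).deleteCol c0
  have attained {r s : Fin n} (hrs : r ≠ s) :=
    hH.sq_dotProduct_deleteCol_withInteractions_add cdel c0 hrs
  have card_cols := card_cols_deleteCol_withInteractions cdel c0
  rw [Fintype.card_fin] at attained card_cols
  have card_cast := cast_choose_two_sub_one (K := ℚ) (n := n) (by lia)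
  have choose_eq : (n - 1).choose 2 - 1 = (n - 2) * (n - 1) / 2 - 1 := by
    rw [Nat.choose_two_right, mul_comm, Nat.sub_sub]
  refine ⟨Es2_eq_of_sq_dotProduct_add_eq_one (by lia) two_level balanced
    ((congrArg Nat.cast card_cols).trans card_cast) fun r s => attained, fun Y hY hYb => ?_⟩
  refine Es2_le_Es2_of_sq_dotProduct_add_le two_level balanced hY hYb
    (card_cols.trans (by rw [choose_eq, Fintype.card_fin])) ((n - 2) / 2) fun r s hrs => ?_
  rw [attained hrs]
  exact IsTwoLevel.one_le_sq_dotProduct_add_of_even hY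
    (even_iff_two_dvd.2 (dvd_trans (by norm_num) h4))
    (by rw [Fintype.card_fin, ← choose_eq, card_cast]) r s
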